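/- For the regular hyperbolic helical polygon with l > 0 and b > 0, for every k ∈ ℤ the strict inequality (T_{k−1} ∧₋ T_k) ∘₋ (T_k ∧₋ T_{k+1}) < |T_{k−1} ∧₋ T_k|₀ · |T_k ∧₋ T_{k+1}|₀ holds, where |v|₀ denotes the (positive) square root of v ∘₋ v; consequently the angle between consecutive binormal directions is space-like. -/

import Mathlib

noncomputable section

/-- The Minkowski pseudo-scalar product on ℝ^{1,2} = ℝ³. -/
def mdot (a b : Fin 3 → ℝ) : ℝ := -(a 0 * b 0) + a 1 * b 1 + a 2 * b 2

/-- The Minkowski cross product on ℝ^{1,2} = ℝ³. -/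
def mcross (a b : Fin 3 → ℝ) : Fin 3 → ℝ :=
  ![-(a 1 * b 2 - a 2 * b 1), a 2 * b 0 - a 0 * b 2, a 0 * b 1 - a 1 * b 0]

/-- The Minkowski pseudo-norm `|v|₀ = √(v ∘₋ v)` (for space-like vectors). -/
def mnorm (v : Fin 3 → ℝ) : ℝ := Real.sqrt (mdot v v)

/-- Tangent vectors of the regular hyperbolic helical polygon with side length
`l` and torsion parameter `b` (with `a = √(1 + b²)`). -/
def hhpT (l b : ℝ) (k : ℤ) : Fin 3 → ℝ :=
  ![Real.sqrt (1 + b ^ 2) * Real.cosh (l / 2 + k * l),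
    Real.sqrt (1 + b ^ 2) * Real.sinh (l / 2 + k * l), b]

/-!
For time-like `v`, the binormals `u ∧₋ v` and `v ∧₋ w` both lie in the space-like plane orthogonal
to `v`, and their cross product is `-det(u, v, w) v`, where `det(u, v, w) = (u ∧₋ v) ∘₋ w`.
Lagrange's identity therefore makes the defect in Cauchy-Schwarz equal to
`-det(u, v, w)² (v ∘₋ v)`, which is positive as soon as `u, v, w` are linearly independent. For
three tangent vectors of the helical polygon the determinant is, up to a nonzero factor, a product
of hyperbolic sines of half the parameter differences.
-/

theorem mdot_comm (u v : Fin 3 → ℝ) : mdot u v = mdot v u := by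
  simp only [mdot]
  ring

theorem mdot_smul_smul (r s : ℝ) (u v : Fin 3 → ℝ) :
    mdot (r • u) (s • v) = r * s * mdot u v := by
  simp only [mdot, Pi.smul_apply, smul_eq_mul]
  ring

theorem mdot_mcross_mcross (u v w x : Fin 3 → ℝ) :
    mdot (mcross u v) (mcross w x) = mdot u x * mdot v w - mdot u w * mdot v x := by
  simp only [mdot, mcross, Matrix.cons_val]
  ring

theorem mdot_mcross_self_right (u v : Fin 3 → ℝ) : mdot v (mcross u v) = 0 := by
  simp only [mdot, mcross, Matrix.cons_val]
  ring

theorem mcross_mcross_mcross_self (u v w : Fin 3 → ℝ) :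
    mcross (mcross u v) (mcross v w) = -mdot (mcross u v) w • v := by
  ext i
  fin_cases i <;> simp [mdot, mcross] <;> ring

theorem mdot_sq_eq (u v : Fin 3 → ℝ) :
    mdot u v ^ 2 = mdot u u * mdot v v + mdot (mcross u v) (mcross u v) := by
  rw [mdot_mcross_mcross, mdot_comm v u]
  ring

theorem mdot_self_nonneg_of_mdot_eq_zero {v x : Fin 3 → ℝ} (hv : mdot v v < 0)
    (hvx : mdot v x = 0) : 0 ≤ mdot x x := by
  simp only [mdot] at hv hvx ⊢
  have time_sq_pos : 0 < v 0 ^ 2 := by nlinarith [sq_nonneg (v 1), sq_nonneg (v 2)]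
  have cauchy_schwarz : (v 0 * x 0) ^ 2 ≤ (v 1 ^ 2 + v 2 ^ 2) * (x 1 ^ 2 + x 2 ^ 2) := by
    have time_eq : v 0 * x 0 = v 1 * x 1 + v 2 * x 2 := by linarith
    rw [time_eq]
    linarith [sq_nonneg (v 1 * x 2 - v 2 * x 1)]
  have space_le_time : v 1 ^ 2 + v 2 ^ 2 ≤ v 0 ^ 2 := by linarith
  have scaled : v 0 ^ 2 * x 0 ^ 2 ≤ v 0 ^ 2 * (x 1 ^ 2 + x 2 ^ 2) :=
    calc v 0 ^ 2 * x 0 ^ 2 = (v 0 * x 0) ^ 2 := by ring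
      _ ≤ (v 1 ^ 2 + v 2 ^ 2) * (x 1 ^ 2 + x 2 ^ 2) := cauchy_schwarz
      _ ≤ v 0 ^ 2 * (x 1 ^ 2 + x 2 ^ 2) := by gcongr
  linarith [le_of_mul_le_mul_left scaled time_sq_pos]

theorem mnorm_mul_mnorm {u : Fin 3 → ℝ} (hu : 0 ≤ mdot u u) (v : Fin 3 → ℝ) :
    mnorm u * mnorm v = Real.sqrt (mdot u u * mdot v v) :=
  (Real.sqrt_mul hu _).symm

theorem abs_mdot_mcross_mcross_lt {u v w : Fin 3 → ℝ} (hv : mdot v v < 0)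
    (huvw : mdot (mcross u v) w ≠ 0) :
    |mdot (mcross u v) (mcross v w)| < mnorm (mcross u v) * mnorm (mcross v w) := by
  have huv : 0 ≤ mdot (mcross u v) (mcross u v) :=
    mdot_self_nonneg_of_mdot_eq_zero hv (mdot_mcross_self_right u v)
  rw [mnorm_mul_mnorm huv, Real.lt_sqrt (abs_nonneg _), sq_abs, mdot_sq_eq,
    mcross_mcross_mcross_self, mdot_smul_smul, neg_mul_neg]
  exact add_lt_of_neg_right _ (mul_neg_of_pos_of_neg (mul_self_pos.mpr huvw) hv)

theorem sinh_two_mul_add_sinh_two_mul_sub_sinh_two_mul_add (x y : ℝ) :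
    Real.sinh (2 * x) + Real.sinh (2 * y) - Real.sinh (2 * (x + y)) =
      -4 * Real.sinh x * Real.sinh y * Real.sinh (x + y) := by
  simp only [Real.sinh_two_mul, Real.sinh_add, Real.cosh_add]
  linear_combination -2 * Real.sinh y * Real.cosh y * Real.cosh_sq x -
    2 * Real.sinh x * Real.cosh x * Real.cosh_sq y

theorem mdot_hhpT_self (l b : ℝ) (k : ℤ) : mdot (hhpT l b k) (hhpT l b k) = -1 := by
  have ha : Real.sqrt (1 + b ^ 2) ^ 2 = 1 + b ^ 2 := Real.sq_sqrt (by positivity)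
  simp only [mdot, hhpT, Matrix.cons_val]
  linear_combination -Real.sqrt (1 + b ^ 2) ^ 2 * Real.cosh_sq (l / 2 + k * l) - ha

theorem mdot_mcross_hhpT_eq_sinh_add (l b : ℝ) (i j k : ℤ) :
    mdot (mcross (hhpT l b i) (hhpT l b j)) (hhpT l b k) =
      (1 + b ^ 2) * b *
        (Real.sinh ((j - i) * l) + Real.sinh ((k - j) * l) - Real.sinh ((k - i) * l)) := by
  have ha : Real.sqrt (1 + b ^ 2) ^ 2 = 1 + b ^ 2 := Real.sq_sqrt (by positivity)
  have sinh_sub_mul (m n : ℤ) : Real.sinh ((n - m) * l) =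
      Real.sinh (l / 2 + n * l) * Real.cosh (l / 2 + m * l) -
        Real.cosh (l / 2 + n * l) * Real.sinh (l / 2 + m * l) := by
    rw [← Real.sinh_sub]
    ring_nf
  rw [sinh_sub_mul, sinh_sub_mul, sinh_sub_mul, ← ha]
  simp only [mdot, mcross, hhpT, Matrix.cons_val]
  ring

theorem mdot_mcross_hhpT (l b : ℝ) (i j k : ℤ) :
    mdot (mcross (hhpT l b i) (hhpT l b j)) (hhpT l b k) =
      -4 * (1 + b ^ 2) * b * Real.sinh ((j - i) * l / 2) * Real.sinh ((k - j) * l / 2) *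
        Real.sinh ((k - i) * l / 2) := by
  have key := sinh_two_mul_add_sinh_two_mul_sub_sinh_two_mul_add ((j - i) * l / 2) ((k - j) * l / 2)
  have half_add : ((j - i) * l / 2 + (k - j) * l / 2 : ℝ) = (k - i) * l / 2 := by ring
  simp only [half_add, mul_div_cancel₀ _ (two_ne_zero' ℝ)] at key
  rw [mdot_mcross_hhpT_eq_sinh_add, key]
  ring

theorem mdot_mcross_hhpT_ne_zero {l b : ℝ} (hl : l ≠ 0) (hb : b ≠ 0) {i j k : ℤ} (hij : i ≠ j)
    (hjk : j ≠ k) (hik : i ≠ k) : mdot (mcross (hhpT l b i) (hhpT l b j)) (hhpT l b k) ≠ 0 := by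
  have sinh_ne_zero {m n : ℤ} (hmn : m ≠ n) : Real.sinh ((n - m) * l / 2) ≠ 0 := by
    have hsub : (n - m : ℝ) ≠ 0 := sub_ne_zero.mpr (Int.cast_injective.ne hmn.symm)
    exact Real.sinh_ne_zero.mpr (div_ne_zero (mul_ne_zero hsub hl) two_ne_zero)
  have ha : 1 + b ^ 2 ≠ 0 := by positivity
  rw [mdot_mcross_hhpT]
  simp [ha, hb, sinh_ne_zero hij, sinh_ne_zero hjk, sinh_ne_zero hik]

theorem hhp_binormal_angle_spacelike_general {l b : ℝ} (hl : l ≠ 0) (hb : b ≠ 0) {i j k : ℤ}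
    (hij : i ≠ j) (hjk : j ≠ k) (hik : i ≠ k) :
    |mdot (mcross (hhpT l b i) (hhpT l b j)) (mcross (hhpT l b j) (hhpT l b k))| <
      mnorm (mcross (hhpT l b i) (hhpT l b j)) * mnorm (mcross (hhpT l b j) (hhpT l b k)) := by
  have timelike : mdot (hhpT l b j) (hhpT l b j) < 0 := by
    rw [mdot_hhpT_self]
    norm_num
  exact abs_mdot_mcross_mcross_lt timelike (mdot_mcross_hhpT_ne_zero hl hb hij hjk hik)

/-- For the regular hyperbolic helical polygon, the strict inequality
`(T_{k−1} ∧₋ T_k) ∘₋ (T_k ∧₋ T_{k+1}) < |T_{k−1} ∧₋ T_k|₀ |T_k ∧₋ T_{k+1}|₀`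
holds, so the angle between consecutive binormal directions is space-like. -/
theorem hhp_binormal_angle_spacelike (l b : ℝ) (hl : 0 < l) (hb : 0 < b) :
    ∀ k : ℤ,
      mdot (mcross (hhpT l b (k - 1)) (hhpT l b k)) (mcross (hhpT l b k) (hhpT l b (k + 1))) <
        mnorm (mcross (hhpT l b (k - 1)) (hhpT l b k)) *
          mnorm (mcross (hhpT l b k) (hhpT l b (k + 1))) := by
  intro k
  exact (le_abs_self _).trans_lt (hhp_binormal_angle_spacelike_general hl.ne' hb.ne'
    (by lia) (by lia) (by lia))
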